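/- Let (X, d, T) be a topological dynamical system. Then for every δ ∈ (0,1), the upper metric mean dimension satisfies mdim̄_M(X,d,T) = limsup_{ε→0} (1/log(1/ε)) · sup_{μ ∈ E_T(X)} h_μ^K(ε, δ). -/

import Mathlib

open Filter MeasureTheory Set Topology

variable {X : Type*}

/-- The dynamical (Bowen) metric `d_n(x,y) = max_{0 ≤ k ≤ n-1} d(T^k x, T^k y)`. -/
noncomputable def dynDist [MetricSpace X] (T : X → X) (n : ℕ) (x y : X) : ℝ :=
  ⨆ k ∈ Finset.range n, dist (T^[k] x) (T^[k] y)

/-- The open dynamical ball `B_n(x, ε) = {y : d_n(x,y) < ε}`. -/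
def dynBall [MetricSpace X] (T : X → X) (n : ℕ) (x : X) (ε : ℝ) : Set X :=
  {y | dynDist T n x y < ε}

/-- `s_n(K, ε)`: the maximal cardinality of an `(n,ε)`-separated subset of `K`. -/
noncomputable def sepNum [MetricSpace X] (T : X → X) (n : ℕ) (K : Set X) (ε : ℝ) : ℕ :=
  sSup {m | ∃ E : Finset X, ↑E ⊆ K ∧
    (∀ x ∈ E, ∀ y ∈ E, x ≠ y → ε < dynDist T n x y) ∧ E.card = m}

/-- `S(K, ε) = limsup_n (1/n) log s_n(K, ε)`. -/
noncomputable def sepEnt [MetricSpace X] (T : X → X) (K : Set X) (ε : ℝ) : EReal :=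
  limsup (fun n : ℕ => ((Real.log (sepNum T n K ε) / n : ℝ) : EReal)) atTop

/-- `r_n(K, ε)`: the minimal cardinality of an `(n,ε)`-spanning set for `K`. -/
noncomputable def spanNum [MetricSpace X] (T : X → X) (n : ℕ) (K : Set X) (ε : ℝ) : ℕ :=
  sInf {m | ∃ F : Finset X, (∀ x ∈ K, ∃ y ∈ F, dynDist T n x y ≤ ε) ∧ F.card = m}

/-- `R(K, ε) = limsup_n (1/n) log r_n(K, ε)`. -/
noncomputable def spanEnt [MetricSpace X] (T : X → X) (K : Set X) (ε : ℝ) : EReal :=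
  limsup (fun n : ℕ => ((Real.log (spanNum T n K ε) / n : ℝ) : EReal)) atTop

/-- Upper metric mean dimension. -/
noncomputable def mdimUpper [MetricSpace X] (T : X → X) : EReal :=
  limsup (fun ε : ℝ => sepEnt T univ ε / ((Real.log (1 / ε) : ℝ) : EReal)) (𝓝[>] (0:ℝ))

/-- Lower metric mean dimension. -/
noncomputable def mdimLower [MetricSpace X] (T : X → X) : EReal :=
  liminf (fun ε : ℝ => sepEnt T univ ε / ((Real.log (1 / ε) : ℝ) : EReal)) (𝓝[>] (0:ℝ))

/-- The ergodic `T`-invariant Borel probability measures. -/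
def ergodicMeasures [MeasurableSpace X] (T : X → X) : Set (Measure X) :=
  {μ | IsProbabilityMeasure μ ∧ Ergodic T μ}

/-- `U` is a finite open cover of `X`. -/
def IsFiniteOpenCover [TopologicalSpace X] (U : Finset (Set X)) : Prop :=
  (∀ V ∈ U, IsOpen V) ∧ ⋃₀ (U : Set (Set X)) = univ

/-- The cover `U^n = ⋁_{i=0}^{n-1} T^{-i} U`. -/
def dynRefine (T : X → X) (U : Finset (Set X)) (n : ℕ) : Set (Set X) :=
  {V | ∃ f : Fin n → Set X, (∀ i, f i ∈ U) ∧ V = ⋂ i : Fin n, T^[(i : ℕ)] ⁻¹' f i}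

/-- `N(C)`: the minimal cardinality of a subcover of `C`. -/
noncomputable def coverNum (C : Set (Set X)) : ℕ :=
  sInf {m | ∃ F : Finset (Set X), ↑F ⊆ C ∧ ⋃₀ (F : Set (Set X)) = univ ∧ F.card = m}

/-- `N_μ(U^n, δ)`: minimal number of members of `U^n` needed to cover a set of measure ≥ δ. -/
noncomputable def shapiraNum [MeasurableSpace X] (T : X → X) (μ : Measure X)
    (U : Finset (Set X)) (n : ℕ) (δ : ℝ) : ℕ :=
  sInf {m | ∃ F : Finset (Set X), ↑F ⊆ dynRefine T U n ∧
    ENNReal.ofReal δ ≤ μ (⋃₀ (F : Set (Set X))) ∧ F.card = m}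

/-- Shapira's entropy `h_μ^S(U, δ) = limsup_n (1/n) log N_μ(U^n, δ)`. -/
noncomputable def shapiraEnt [MeasurableSpace X] (T : X → X) (μ : Measure X)
    (U : Finset (Set X)) (δ : ℝ) : EReal :=
  limsup (fun n : ℕ => ((Real.log (shapiraNum T μ U n δ) / n : ℝ) : EReal)) atTop

/-- `N_μ^δ(n, ε)`: smallest number of open `(n,ε)`-dynamical balls whose union has
measure `> δ`. -/
noncomputable def katokNum [MetricSpace X] [MeasurableSpace X] (T : X → X) (μ : Measure X)
    (n : ℕ) (ε δ : ℝ) : ℕ :=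
  sInf {m | ∃ F : Finset X, ENNReal.ofReal δ < μ (⋃ x ∈ F, dynBall T n x ε) ∧ F.card = m}

/-- Katok's entropy `h_μ^K(ε, δ) = limsup_n (1/n) log N_μ^δ(n, ε)`. -/
noncomputable def katokEnt [MetricSpace X] [MeasurableSpace X] (T : X → X) (μ : Measure X)
    (ε δ : ℝ) : EReal :=
  limsup (fun n : ℕ => ((Real.log (katokNum T μ n ε δ) / n : ℝ) : EReal)) atTop

/-- Lower Katok entropy `h̲_μ^K(ε, δ) = liminf_n (1/n) log N_μ^δ(n, ε)`. -/
noncomputable def katokEntLower [MetricSpace X] [MeasurableSpace X] (T : X → X) (μ : Measure X)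
    (ε δ : ℝ) : EReal :=
  liminf (fun n : ℕ => ((Real.log (katokNum T μ n ε δ) / n : ℝ) : EReal)) atTop

/-- `Ñ_μ^δ(n, ε)`: smallest number of sets of `d_n`-diameter ≤ ε whose union has
measure `> δ`. -/
noncomputable def katokNumTilde [MetricSpace X] [MeasurableSpace X] (T : X → X) (μ : Measure X)
    (n : ℕ) (ε δ : ℝ) : ℕ :=
  sInf {m | ∃ F : Finset (Set X), (∀ A ∈ F, ∀ x ∈ A, ∀ y ∈ A, dynDist T n x y ≤ ε) ∧
    ENNReal.ofReal δ < μ (⋃₀ (F : Set (Set X))) ∧ F.card = m}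

/-- Brin–Katok local entropy `h_μ^{BK}(x, ε) = limsup_n -(1/n) log μ(B_n(x, ε))`. -/
noncomputable def brinKatok [MetricSpace X] [MeasurableSpace X] (T : X → X) (μ : Measure X)
    (x : X) (ε : ℝ) : EReal :=
  limsup (fun n : ℕ => -(ENNReal.log (μ (dynBall T n x ε))) / (n : EReal)) atTop

/-- Lower Brin–Katok local entropy `h̲_μ^{BK}(x, ε) = liminf_n -(1/n) log μ(B_n(x, ε))`. -/
noncomputable def brinKatokLower [MetricSpace X] [MeasurableSpace X] (T : X → X) (μ : Measure X)
    (x : X) (ε : ℝ) : EReal :=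
  liminf (fun n : ℕ => -(ENNReal.log (μ (dynBall T n x ε))) / (n : EReal)) atTop

/-- Local entropy function `h_d(x, ε) = inf { S(K, ε) : K closed neighborhood of x }`. -/
noncomputable def locEnt [MetricSpace X] (T : X → X) (x : X) (ε : ℝ) : EReal :=
  ⨅ K ∈ {K : Set X | IsClosed K ∧ K ∈ 𝓝 x}, sepEnt T K ε

/-- Local spanning entropy `h̃_d(x, ε) = inf { R(K, ε) : K closed neighborhood of x }`. -/
noncomputable def locSpanEnt [MetricSpace X] (T : X → X) (x : X) (ε : ℝ) : EReal :=
  ⨅ K ∈ {K : Set X | IsClosed K ∧ K ∈ 𝓝 x}, spanEnt T K ε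

/-- `U_x^n`: the union of all cells of `U^n` containing `x`. -/
def dynCoverCell (T : X → X) (U : Finset (Set X)) (n : ℕ) (x : X) : Set X :=
  ⋃₀ {V | V ∈ dynRefine T U n ∧ x ∈ V}

section Combinatorics
variable [MetricSpace X]

/-- `A` is covered by at most `m` sets of `d_n`-diameter at most `ρ`. -/
def DCov (T : X → X) (ρ : ℝ) (n : ℕ) (A : Set X) (m : ℝ) : Prop :=
  ∃ 𝒜 : Finset (Set X), A ⊆ ⋃₀ (𝒜 : Set (Set X)) ∧
    (∀ S ∈ 𝒜, ∀ x ∈ S, ∀ y ∈ S, ∀ k < n, dist (T^[k] x) (T^[k] y) ≤ ρ) ∧ (𝒜.card : ℝ) ≤ m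

lemma DCov.mono {T : X → X} {ρ : ℝ} {n : ℕ} {A B : Set X} {m m' : ℝ}
    (h : DCov T ρ n A m) (hB : B ⊆ A) (hm : m ≤ m') : DCov T ρ n B m' := by
  obtain ⟨F, h1, h2, h3⟩ := h
  exact ⟨F, hB.trans h1, h2, h3.trans hm⟩

lemma DCov.empty (T : X → X) (ρ : ℝ) (n : ℕ) : DCov T ρ n ∅ 0 :=
  ⟨∅, by simp, by simp, by simp⟩

lemma DCov.zero (T : X → X) (ρ : ℝ) (A : Set X) : DCov T ρ 0 A 1 :=
  ⟨{univ}, by simp, by simp, by simp⟩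

lemma DCov.union {T : X → X} {ρ : ℝ} {n : ℕ} {A B : Set X} {m m' : ℝ}
    (h : DCov T ρ n A m) (h' : DCov T ρ n B m') : DCov T ρ n (A ∪ B) (m + m') := by
  classical
  obtain ⟨F, h1, h2, h3⟩ := h
  obtain ⟨F', h1', h2', h3'⟩ := h'
  refine ⟨F ∪ F', ?_, ?_, ?_⟩
  · rw [Finset.coe_union, sUnion_union]
    exact union_subset_union h1 h1'
  · intro S hS
    rcases Finset.mem_union.1 hS with hS | hS
    · exact h2 S hS
    · exact h2' S hS
  · have : ((F ∪ F').card : ℝ) ≤ F.card + F'.card := by exact_mod_cast Finset.card_union_le F F'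
    linarith

lemma DCov.biUnion {T : X → X} {ρ : ℝ} {n : ℕ} {ι : Type*} (s : Finset ι) {A : ι → Set X}
    {m : ι → ℝ} (h : ∀ i ∈ s, DCov T ρ n (A i) (m i)) :
    DCov T ρ n (⋃ i ∈ s, A i) (∑ i ∈ s, m i) := by
  classical
  induction s using Finset.induction_on with
  | empty => simpa using DCov.empty T ρ n
  | insert a s ha ih =>
    rw [Finset.sum_insert ha, Finset.set_biUnion_insert]
    exact (h a (Finset.mem_insert_self _ _)).union
      (ih fun i hi => h i (Finset.mem_insert_of_mem hi))

lemma DCov.concat {T : X → X} {ρ : ℝ} {n n' : ℕ} {A B : Set X} {m m' : ℝ}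
    (h : DCov T ρ n A m) (h' : DCov T ρ n' B m') :
    DCov T ρ (n + n') (A ∩ T^[n] ⁻¹' B) (m * m') := by
  classical
  obtain ⟨F, h1, h2, h3⟩ := h
  obtain ⟨F', h1', h2', h3'⟩ := h'
  refine ⟨(F ×ˢ F').image (fun p => p.1 ∩ T^[n] ⁻¹' p.2), ?_, ?_, ?_⟩
  · rintro x ⟨hx, hx'⟩
    obtain ⟨S, hS, hxS⟩ := h1 hx
    obtain ⟨S', hS', hxS'⟩ := h1' hx'
    refine ⟨S ∩ T^[n] ⁻¹' S', ?_, hxS, hxS'⟩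
    simp only [Finset.coe_image, mem_image, Finset.mem_coe, Finset.mem_product]
    exact ⟨(S, S'), ⟨hS, hS'⟩, rfl⟩
  · intro S hS x hx y hy k hk
    simp only [Finset.mem_image, Finset.mem_product] at hS
    obtain ⟨⟨S1, S2⟩, ⟨hS1, hS2⟩, rfl⟩ := hS
    rcases lt_or_ge k n with hkn | hkn
    · exact h2 S1 hS1 x hx.1 y hy.1 k hkn
    · have := h2' S2 hS2 _ hx.2 _ hy.2 (k - n) (by omega)
      rwa [← Function.iterate_add_apply, ← Function.iterate_add_apply,
        Nat.sub_add_cancel hkn] at this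
  · have h4 : (((F ×ˢ F').image (fun p => p.1 ∩ T^[n] ⁻¹' p.2)).card : ℝ)
        ≤ F.card * F'.card := by
      have := Finset.card_image_le (s := F ×ˢ F') (f := fun p => p.1 ∩ T^[n] ⁻¹' p.2)
      rw [Finset.card_product] at this
      exact_mod_cast this
    refine h4.trans (mul_le_mul h3 h3' (by positivity) ?_)
    exact le_trans (by positivity) h3

/-- `x` can be tiled on `[0,n)` by blocks of length `N ≥ M` starting in `V N`, with at most `f`
free cells. -/
inductive Tiled (T : X → X) (V : ℕ → Set X) (M : ℕ) : ℕ → ℕ → X → Prop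
  | nil (f : ℕ) (x : X) : Tiled T V M 0 f x
  | free (n f : ℕ) (x : X) : Tiled T V M n f (T x) → Tiled T V M (n + 1) (f + 1) x
  | block (N n f : ℕ) (x : X) : M ≤ N → x ∈ V N → Tiled T V M n f (T^[N] x) →
      Tiled T V M (N + n) f x

lemma Tiled.mono {T : X → X} {V : ℕ → Set X} {M n f : ℕ} {x : X} (h : Tiled T V M n f x)
    {f' : ℕ} (hf : f ≤ f') : Tiled T V M n f' x := by
  induction h generalizing f' with
  | nil f x => exact .nil _ _
  | free n f x h ih =>
    obtain ⟨g, rfl⟩ : ∃ g, f' = g + 1 := ⟨f' - 1, by omega⟩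
    exact .free _ _ _ (ih (by omega))
  | block N n f x hM hx h ih => exact .block _ _ _ _ hM hx (ih hf)

lemma Tiled.monoV {T : X → X} {V V' : ℕ → Set X} {M n f : ℕ} {x : X} (h : Tiled T V M n f x)
    (hV : ∀ N, M ≤ N → N ≤ n → V N ⊆ V' N) : Tiled T V' M n f x := by
  induction h with
  | nil f x => exact .nil _ _
  | free n f x h ih => exact .free _ _ _ (ih fun N h1 h2 => hV N h1 (by omega))
  | block N n f x hM hx h ih =>
    exact .block _ _ _ _ hM (hV N hM (by omega) hx) (ih fun N h1 h2 => hV N h1 (by omega))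

lemma Tiled.allFree (T : X → X) (V : ℕ → Set X) (M : ℕ) (n f : ℕ) (x : X) (h : n ≤ f) :
    Tiled T V M n f x := by
  induction n generalizing f x with
  | zero => exact .nil _ _
  | succ n ih =>
    obtain ⟨g, rfl⟩ : ∃ g, f = g + 1 := ⟨f - 1, by omega⟩
    exact .free _ _ _ (ih _ _ (by omega))

lemma Tiled.shift {T : X → X} {V : ℕ → Set X} {M : ℕ} (j n : ℕ) {x : X} (hn : M ≤ n)
    (hx : T^[j] x ∈ V n) : Tiled T V M (n + j) j x := by
  induction j generalizing x with
  | zero => exact .block n 0 0 x hn hx (.nil _ _)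
  | succ j ih => exact .free _ _ _ (ih hx)

lemma Tiled.isOpen {T : X → X} (hT : Continuous T) {V : ℕ → Set X} (hV : ∀ n, IsOpen (V n))
    (M n f : ℕ) : IsOpen {x | Tiled T V M n f x} := by
  rw [isOpen_iff_mem_nhds]
  intro x hx
  change Tiled T V M n f x at hx
  change ∀ᶠ y in 𝓝 x, Tiled T V M n f y
  induction hx with
  | nil f x => exact Eventually.of_forall fun y => .nil _ _
  | free n f x h ih =>
    exact (hT.tendsto x |>.eventually ih).mono fun y hy => .free _ _ _ hy
  | block N n f x hM hx h ih =>
    filter_upwards [(hT.iterate N).tendsto x |>.eventually ih, (hV N).mem_nhds hx] with y h1 h2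
    exact .block _ _ _ _ hM h2 h1

lemma Tiled.cov {T : X → X} {V : ℕ → Set X} {M : ℕ} (hM : 1 ≤ M) {ρ C s γ : ℝ} (hs : 0 ≤ s)
    (hγ : 0 < γ) (hC : 1 ≤ C) (hCov : DCov T ρ 1 univ C)
    (hgeo : ∀ n : ℕ, ∑ N ∈ Finset.Icc M n, Real.exp (-(γ * N)) ≤ 1 / 2)
    (hV : ∀ N, M ≤ N → DCov T ρ N (V N) (Real.exp (s * N))) (n f : ℕ) :
    DCov T ρ n {x | Tiled T V M n f x} ((2 * C) ^ f * Real.exp ((s + γ) * n)) := by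
  induction n using Nat.strong_induction_on generalizing f with
  | _ n ih =>
  rcases Nat.eq_zero_or_pos n with rfl | hn
  · refine (DCov.zero T ρ _).mono subset_rfl ?_
    simp only [CharP.cast_eq_zero, mul_zero, Real.exp_zero, mul_one]
    exact one_le_pow₀ (by linarith)
  -- free part
  have hfree : DCov T ρ n {x | ∃ g, f = g + 1 ∧ Tiled T V M (n - 1) g (T x)}
      (1 / 2 * ((2 * C) ^ f * Real.exp ((s + γ) * n))) := by
    rcases Nat.eq_zero_or_pos f with rfl | hf
    · refine (DCov.empty T ρ n).mono ?_ (by positivity)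
      rintro x ⟨g, hg, -⟩
      omega
    · obtain ⟨g, rfl⟩ : ∃ g, f = g + 1 := ⟨f - 1, by omega⟩
      have h1 := hCov.concat (ih (n - 1) (by omega) g)
      rw [show 1 + (n - 1) = n by omega] at h1
      refine h1.mono ?_ ?_
      · rintro x ⟨g', hg', hx⟩
        obtain rfl : g = g' := by omega
        exact ⟨mem_univ _, hx⟩
      · have h2 : Real.exp ((s + γ) * ((n - 1 : ℕ) : ℝ)) ≤ Real.exp ((s + γ) * n) := by
          apply Real.exp_le_exp.2
          have : ((n - 1 : ℕ) : ℝ) ≤ n := by exact_mod_cast Nat.sub_le n 1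
          have h0 : 0 ≤ s + γ := by linarith
          exact mul_le_mul_of_nonneg_left this h0
        calc C * ((2 * C) ^ g * Real.exp ((s + γ) * ((n - 1 : ℕ) : ℝ)))
            ≤ C * ((2 * C) ^ g * Real.exp ((s + γ) * n)) := by gcongr
          _ = 1 / 2 * ((2 * C) ^ (g + 1) * Real.exp ((s + γ) * n)) := by ring
  have hblock : DCov T ρ n (⋃ N ∈ Finset.Icc M n, (V N ∩ T^[N] ⁻¹' {x | Tiled T V M (n - N) f x}))
      (1 / 2 * ((2 * C) ^ f * Real.exp ((s + γ) * n))) := by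
    have h1 : ∀ N ∈ Finset.Icc M n, DCov T ρ n (V N ∩ T^[N] ⁻¹' {x | Tiled T V M (n - N) f x})
        (Real.exp (-(γ * N)) * ((2 * C) ^ f * Real.exp ((s + γ) * n))) := by
      intro N hN
      rw [Finset.mem_Icc] at hN
      have h2 := (hV N hN.1).concat (ih (n - N) (by omega) f)
      rw [show N + (n - N) = n by omega] at h2
      refine h2.mono subset_rfl (le_of_eq ?_)
      rw [Nat.cast_sub hN.2, mul_left_comm, mul_left_comm (Real.exp (-(γ * N))), ← Real.exp_add,
        ← Real.exp_add]
      congr 2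
      ring
    refine (DCov.biUnion _ h1).mono subset_rfl ?_
    rw [← Finset.sum_mul]
    exact mul_le_mul_of_nonneg_right (hgeo n) (by positivity)
  refine (hfree.union hblock).mono ?_ (by linarith)
  intro x hx
  change Tiled T V M n f x at hx
  cases hx with
  | nil => omega
  | free n f x h => left; exact ⟨_, rfl, h⟩
  | block N n f x hMN hx h =>
    right
    simp only [mem_iUnion]
    refine ⟨N, Finset.mem_Icc.2 ⟨hMN, by omega⟩, hx, ?_⟩
    change Tiled T V M (N + n - N) f (T^[N] x)
    rwa [Nat.add_sub_cancel_left]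

open Classical in
/-- number of visits to the set `B` before time `n` -/
noncomputable def visits (T : X → X) (B : Set X) (n : ℕ) (x : X) : ℕ :=
  ((Finset.range n).filter fun k => T^[k] x ∈ B).card

lemma visits_eq_sum (T : X → X) (B : Set X) (n : ℕ) (x : X) :
    (visits T B n x : ℝ) = ∑ k ∈ Finset.range n, B.indicator (fun _ => (1 : ℝ)) (T^[k] x) := by
  classical
  rw [visits, Finset.card_filter]
  push_cast
  exact Finset.sum_congr rfl fun k _ => by by_cases h : T^[k] x ∈ B <;> simp [h]

lemma visits_add (T : X → X) (B : Set X) (n m : ℕ) (x : X) :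
    visits T B (n + m) x = visits T B n x + visits T B m (T^[n] x) := by
  have : (visits T B (n + m) x : ℝ) = visits T B n x + visits T B m (T^[n] x) := by
    simp only [visits_eq_sum]
    rw [Finset.sum_range_add]
    congr 1
    refine Finset.sum_congr rfl fun k _ => ?_
    rw [← Function.iterate_add_apply, add_comm]
  exact_mod_cast this

lemma visits_le (T : X → X) (B : Set X) (n : ℕ) (x : X) : visits T B n x ≤ n := by
  classical
  rw [visits]
  exact (Finset.card_filter_le _ _).trans (by simp)

lemma visits_mono (T : X → X) {B B' : Set X} (h : B ⊆ B') (n : ℕ) (x : X) :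
    visits T B n x ≤ visits T B' n x := by
  classical
  exact Finset.card_le_card (Finset.monotone_filter_right _ fun k _ hk => h hk)

lemma visits_one (T : X → X) {B : Set X} {x : X} (h : x ∈ B) : visits T B 1 x = 1 := by
  have : (visits T B 1 x : ℝ) = 1 := by simp [visits_eq_sum, h]
  exact_mod_cast this

lemma Tiled.greedy (T : X → X) (V : ℕ → Set X) {M K : ℕ} (hM : 1 ≤ M) (n : ℕ) (x : X) :
    Tiled T V M n (visits T (⋃ N ∈ Finset.Icc M K, V N)ᶜ n x + K) x := by
  induction n using Nat.strong_induction_on generalizing x with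
  | _ n ih =>
  rcases le_or_gt n K with hnK | hnK
  · exact Tiled.allFree _ _ _ _ _ _ (by omega)
  by_cases hx : x ∈ ⋃ N ∈ Finset.Icc M K, V N
  · simp only [mem_iUnion] at hx
    obtain ⟨N, hN, hxN⟩ := hx
    rw [Finset.mem_Icc] at hN
    obtain ⟨m, rfl⟩ : ∃ m, n = N + m := ⟨n - N, by omega⟩
    refine .block _ _ _ _ hN.1 hxN ((ih m (by omega) _).mono ?_)
    rw [visits_add]
    omega
  · obtain ⟨m, rfl⟩ : ∃ m, n = 1 + m := ⟨n - 1, by omega⟩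
    rw [visits_add, visits_one T hx, add_comm 1 m, show ∀ a, 1 + a + K = a + K + 1 by intro; omega]
    exact .free _ _ _ (ih m (by omega) _)

lemma visits_uniform (T : X → X) (B : Set X) {L : ℕ} (hL : 1 ≤ L) {η : ℝ}
    (hη : 0 ≤ η) (h : ∀ x, (visits T B L x : ℝ) ≤ η * L) (n : ℕ) (x : X) :
    (visits T B n x : ℝ) ≤ η * n + L := by
  induction n using Nat.strong_induction_on generalizing x with
  | _ n ih =>
  rcases le_or_gt n L with hnL | hnL
  · have : (visits T B n x : ℝ) ≤ L := by exact_mod_cast (visits_le T B n x).trans hnL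
    have : 0 ≤ η * n := by positivity
    linarith
  · obtain ⟨m, rfl⟩ : ∃ m, n = L + m := ⟨n - L, by omega⟩
    rw [visits_add]
    have h1 := h x
    have h2 := ih m (by omega) (T^[L] x)
    push_cast
    linarith

end Combinatorics

section ErgodicExistence
variable [MetricSpace X] [CompactSpace X] [MeasurableSpace X] [BorelSpace X]

lemma isClosed_le_measure {A : Set X} (hA : IsClosed A) (m : ENNReal) :
    IsClosed {ν : ProbabilityMeasure X | m ≤ (ν : Measure X) A} := by
  apply isClosed_of_closure_subset
  intro ν hν
  obtain ⟨u, hu, hlim⟩ := mem_closure_iff_seq_limit.1 hν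
  have h1 := ProbabilityMeasure.limsup_measure_closed_le_of_tendsto hlim hA
  refine le_trans ?_ h1
  calc m = limsup (fun _ : ℕ => m) atTop := limsup_const m |>.symm
    _ ≤ _ := limsup_le_limsup (Eventually.of_forall hu)

lemma exists_separating (X : Type*) [MetricSpace X] [CompactSpace X] [MeasurableSpace X]
    [BorelSpace X] : ∃ g : ℕ → BoundedContinuousFunction X ℝ, (∀ i, ‖g i‖ ≤ 1) ∧
    ∀ μ ν : Measure X, IsProbabilityMeasure μ → IsProbabilityMeasure ν →
      (∀ i, ∫ x, g i x ∂μ = ∫ x, g i x ∂ν) → μ = ν := by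
  let f : ℕ → C(X, ℝ) := TopologicalSpace.denseSeq C(X, ℝ)
  let F : ℕ → BoundedContinuousFunction X ℝ := fun i => BoundedContinuousFunction.mkOfCompact (f i)
  refine ⟨fun i => (1 + ‖F i‖)⁻¹ • F i, fun i => ?_, ?_⟩
  · have h0 : 0 ≤ ‖F i‖ := norm_nonneg _
    rw [norm_smul, norm_inv, Real.norm_of_nonneg (by linarith), inv_mul_le_iff₀ (by linarith)]
    linarith
  · intro μ ν hμ hν h
    apply ext_of_forall_integral_eq_of_IsFiniteMeasure
    intro φ
    have hcont : ∀ μ : Measure X, IsProbabilityMeasure μ →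
        Continuous (fun u : C(X, ℝ) => ∫ x, u x ∂μ) := by
      intro μ hμ
      have hI : ∀ u : C(X, ℝ), Integrable u μ := fun u =>
        (BoundedContinuousFunction.integrable μ (BoundedContinuousFunction.mkOfCompact u))
      refine LipschitzWith.continuous (K := 1) (LipschitzWith.of_dist_le_mul fun u v => ?_)
      rw [dist_eq_norm, ← integral_sub (hI u) (hI v)]
      have := norm_integral_le_of_norm_le_const (μ := μ) (f := fun x => u x - v x) (C := ‖u - v‖)
        (Eventually.of_forall fun x => (u - v).norm_coe_le_norm x)
      simpa [dist_eq_norm] using this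
    have hall : ∀ u : C(X, ℝ), ∫ x, u x ∂μ = ∫ x, u x ∂ν := by
      intro u
      refine (TopologicalSpace.denseRange_denseSeq C(X, ℝ)).induction_on
        (p := fun u : C(X, ℝ) => ∫ x, u x ∂μ = ∫ x, u x ∂ν) u
        (isClosed_eq (hcont μ hμ) (hcont ν hν)) ?_
      intro i
      have h1 := h i
      simp only [BoundedContinuousFunction.coe_smul, integral_smul] at h1
      have h0 : (1 + ‖F i‖)⁻¹ ≠ 0 := by positivity
      exact smul_right_injective ℝ h0 h1
    exact hall φ.toContinuousMap

lemma exists_ergodic_ge {T : X → X} (hT : Continuous T) {A : Set X} (hA : IsClosed A)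
    (ν : Measure X) [IsProbabilityMeasure ν] (hν : MeasurePreserving T ν ν) :
    ∃ μ ∈ ergodicMeasures T, ν A ≤ μ A := by
  let I : Set (ProbabilityMeasure X) := {ν | ν.map hT.measurable.aemeasurable = ν}
  have hI : IsClosed I := isClosed_eq (ProbabilityMeasure.continuous_map hT) continuous_id
  have hImem : ∀ ν : ProbabilityMeasure X, ν ∈ I ↔
      MeasurePreserving T (ν : Measure X) (ν : Measure X) := by
    intro ν
    constructor
    · intro h
      refine ⟨hT.measurable, ?_⟩
      have := congrArg (fun ν : ProbabilityMeasure X => (ν : Measure X)) h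
      simpa using this
    · intro h
      exact Subtype.ext h.map_eq
  have hne : I.Nonempty := ⟨⟨ν, inferInstance⟩, (hImem _).2 hν⟩
  have husc : UpperSemicontinuous (fun ν : ProbabilityMeasure X => (ν : Measure X) A) :=
    upperSemicontinuous_iff_isClosed_preimage.2 fun m => isClosed_le_measure hA m
  obtain ⟨ν₀, hν₀I, hmax⟩ := UpperSemicontinuousOn.exists_isMaxOn hne hI.isCompact
    (husc.upperSemicontinuousOn I)
  obtain ⟨g, hg1, hgsep⟩ := exists_separating X
  let J : ℕ → Measure X → ℝ := fun i μ => ∫ x, g i x ∂μ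
  have hJ1 : ∀ i (μ : Measure X), IsProbabilityMeasure μ → (J i μ) ^ 2 ≤ 1 := by
    intro i μ hμ
    have : ‖∫ x, g i x ∂μ‖ ≤ 1 := by
      have := norm_integral_le_of_norm_le_const (μ := μ) (f := fun x => g i x) (C := 1)
        (Eventually.of_forall fun x => ((g i).norm_coe_le_norm x).trans (hg1 i))
      simpa using this
    rw [sq_le_one_iff_abs_le_one]
    exact this
  let Ψ : Measure X → ℝ := fun μ => ∑' i, (1 / 2 : ℝ) ^ i * (J i μ) ^ 2
  have hsum : ∀ μ : Measure X, IsProbabilityMeasure μ →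
      Summable fun i => (1 / 2 : ℝ) ^ i * (J i μ) ^ 2 := by
    intro μ hμ
    refine Summable.of_nonneg_of_le (fun i => by positivity) (fun i => ?_)
      (summable_geometric_of_lt_one (r := (1 / 2 : ℝ)) (by norm_num) (by norm_num))
    have := hJ1 i μ hμ
    have h2 : (0 : ℝ) < (1 / 2) ^ i := by positivity
    nlinarith
  have hΨ : Continuous fun ν : ProbabilityMeasure X => Ψ (ν : Measure X) := by
    refine continuous_tsum (fun i => ?_)
      (summable_geometric_of_lt_one (r := (1 / 2 : ℝ)) (by norm_num) (by norm_num)) ?_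
    · exact continuous_const.mul
        ((ProbabilityMeasure.continuous_integral_boundedContinuousFunction (g i)).pow 2)
    · intro i ν
      have := hJ1 i (ν : Measure X) inferInstance
      have h2 : (0 : ℝ) < (1 / 2) ^ i := by positivity
      rw [Real.norm_of_nonneg (by positivity)]
      nlinarith [sq_nonneg (J i (ν : Measure X))]
  let F₀ : Set (ProbabilityMeasure X) := I ∩ {ν | (ν₀ : Measure X) A ≤ (ν : Measure X) A}
  have hF₀ : IsClosed F₀ := hI.inter (isClosed_le_measure hA _)
  obtain ⟨μ, ⟨hμI, hμA⟩, hμmax⟩ := hF₀.isCompact.exists_isMaxOn ⟨ν₀, hν₀I, le_refl ((ν₀ : Measure X) A)⟩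
    hΨ.continuousOn
  refine ⟨(μ : Measure X), ⟨inferInstance, ?_⟩,
    (hmax ((hImem ⟨ν, inferInstance⟩).2 hν)).trans hμA⟩
  apply Ergodic.of_mem_extremePoints
  refine ⟨⟨(hImem μ).1 hμI, inferInstance⟩, ?_⟩
  rintro μ₁ ⟨h1, p1⟩ μ₂ ⟨h2, p2⟩ ⟨a, b, ha, hb, hab, hsumμ⟩
  have hmem : ∀ μ' : Measure X, ∀ _ : IsProbabilityMeasure μ', MeasurePreserving T μ' μ' →
      μ' A ≤ (μ : Measure X) A := by
    intro μ' p h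
    exact (hmax ((hImem ⟨μ', p⟩).2 h)).trans hμA
  have ha1 : a ≤ 1 := hab ▸ le_self_add
  have hb1 : b ≤ 1 := hab ▸ le_add_self
  have hatop : a ≠ ⊤ := (ha1.trans_lt ENNReal.one_lt_top).ne
  have hbtop : b ≠ ⊤ := (hb1.trans_lt ENNReal.one_lt_top).ne
  have hμAeq : (μ : Measure X) A = a * μ₁ A + b * μ₂ A := by
    rw [← hsumμ]; simp
  have hm1 := hmem μ₁ p1 h1
  have hm2 := hmem μ₂ p2 h2
  -- real versions
  set r := a.toReal with hr
  set t := b.toReal with ht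
  have hr0 : 0 < r := ENNReal.toReal_pos ha.ne' hatop
  have ht0 : 0 < t := ENNReal.toReal_pos hb.ne' hbtop
  have hrt : r + t = 1 := by
    rw [hr, ht, ← ENNReal.toReal_add hatop hbtop, hab, ENNReal.toReal_one]
  have hAreal : (μ : Measure X).real A = r * μ₁.real A + t * μ₂.real A := by
    simp only [Measure.real, hμAeq]
    rw [ENNReal.toReal_add (ENNReal.mul_ne_top hatop (measure_ne_top _ _))
      (ENNReal.mul_ne_top hbtop (measure_ne_top _ _)), ENNReal.toReal_mul, ENNReal.toReal_mul]
  have hm1' : μ₁.real A ≤ (μ : Measure X).real A :=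
    ENNReal.toReal_mono (measure_ne_top _ _) hm1
  have hm2' : μ₂.real A ≤ (μ : Measure X).real A :=
    ENNReal.toReal_mono (measure_ne_top _ _) hm2
  have hone : r * (μ : Measure X).real A + t * (μ : Measure X).real A = (μ : Measure X).real A := by
    rw [← add_mul, hrt, one_mul]
  have he1 : (μ : Measure X).real A ≤ μ₁.real A := by
    by_contra hlt
    push Not at hlt
    have q1 := mul_lt_mul_of_pos_left hlt hr0
    have q2 := mul_le_mul_of_nonneg_left hm2' ht0.le
    linarith
  have he2 : (μ : Measure X).real A ≤ μ₂.real A := by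
    by_contra hlt
    push Not at hlt
    have q1 := mul_lt_mul_of_pos_left hlt ht0
    have q2 := mul_le_mul_of_nonneg_left hm1' hr0.le
    linarith
  have hconv : ∀ μ' : Measure X, ∀ _ : IsProbabilityMeasure μ',
      (μ : Measure X).real A ≤ μ'.real A → (μ : Measure X) A ≤ μ' A := by
    intro μ' p h
    exact (ENNReal.toReal_le_toReal (measure_ne_top _ _) (measure_ne_top _ _)).1 h
  have hΨ1 : Ψ μ₁ ≤ Ψ (μ : Measure X) :=
    hμmax (a := ⟨μ₁, p1⟩) ⟨(hImem ⟨μ₁, p1⟩).2 h1, hμA.trans (hconv μ₁ p1 he1)⟩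
  have hΨ2 : Ψ μ₂ ≤ Ψ (μ : Measure X) :=
    hμmax (a := ⟨μ₂, p2⟩) ⟨(hImem ⟨μ₂, p2⟩).2 h2, hμA.trans (hconv μ₂ p2 he2)⟩
  have hJ : ∀ i, J i (μ : Measure X) = r * J i μ₁ + t * J i μ₂ := by
    intro i
    simp only [J]
    rw [← hsumμ, integral_add_measure, integral_smul_measure, integral_smul_measure]
    · simp [hr, ht]
    · exact (BoundedContinuousFunction.integrable μ₁ (g i)).smul_measure hatop
    · exact (BoundedContinuousFunction.integrable μ₂ (g i)).smul_measure hbtop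
  have hterm : ∀ i, (1 / 2 : ℝ) ^ i * (J i (μ : Measure X)) ^ 2
      + (1 / 2 : ℝ) ^ i * (r * t * (J i μ₁ - J i μ₂) ^ 2)
      = r * ((1 / 2 : ℝ) ^ i * (J i μ₁) ^ 2) + t * ((1 / 2 : ℝ) ^ i * (J i μ₂) ^ 2) := by
    intro i
    rw [hJ i]
    have : t = 1 - r := by linarith
    rw [this]
    ring
  have hs1 := hsum μ₁ p1
  have hs2 := hsum μ₂ p2
  have hs := hsum (μ : Measure X) inferInstance
  have hs3 : Summable fun i => (1 / 2 : ℝ) ^ i * (r * t * (J i μ₁ - J i μ₂) ^ 2) := by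
    have := ((hs1.mul_left r).add (hs2.mul_left t)).sub hs
    refine this.congr fun i => ?_
    rw [← hterm i]; ring
  have htot : Ψ (μ : Measure X) + ∑' i, (1 / 2 : ℝ) ^ i * (r * t * (J i μ₁ - J i μ₂) ^ 2)
      = r * Ψ μ₁ + t * Ψ μ₂ := by
    simp only [Ψ]
    rw [← hs.tsum_add hs3, ← tsum_mul_left, ← tsum_mul_left,
      ← (hs1.mul_left r).tsum_add (hs2.mul_left t)]
    exact tsum_congr hterm
  have hle : ∑' i, (1 / 2 : ℝ) ^ i * (r * t * (J i μ₁ - J i μ₂) ^ 2) ≤ 0 := by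
    have : r * Ψ μ₁ + t * Ψ μ₂ ≤ Ψ (μ : Measure X) := by
      have e : Ψ (μ : Measure X) = r * Ψ (μ : Measure X) + t * Ψ (μ : Measure X) := by
        rw [← add_mul, hrt, one_mul]
      rw [e]
      gcongr
    linarith
  have hJeq : ∀ i, J i μ₁ = J i μ₂ := by
    intro i
    have h0 := hs3.le_tsum i (fun j _ => by positivity)
    have h3 : (1 / 2 : ℝ) ^ i * (r * t * (J i μ₁ - J i μ₂) ^ 2) ≤ 0 := h0.trans hle
    by_contra hne
    have : 0 < (J i μ₁ - J i μ₂) ^ 2 := by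
      have := sub_ne_zero.2 hne
      positivity
    have : 0 < (1 / 2 : ℝ) ^ i * (r * t * (J i μ₁ - J i μ₂) ^ 2) := by positivity
    linarith
  have h12 : μ₁ = μ₂ := hgsep μ₁ μ₂ p1 p2 hJeq
  rw [← hsumμ, ← h12, ← add_smul, hab, one_smul]

/-- empirical measures -/
noncomputable def empir (T : X → X) (x : X) (L : ℕ) : Measure X :=
  ((L : ENNReal) + 1)⁻¹ • ∑ k ∈ Finset.range (L + 1), Measure.dirac (T^[k] x)

instance (T : X → X) (x : X) (L : ℕ) : IsProbabilityMeasure (empir T x L) := by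
  constructor
  simp only [empir, Measure.smul_apply, Measure.finsetSum_apply, measure_univ, smul_eq_mul]
  simp only [Finset.sum_const, Finset.card_range, nsmul_eq_mul, mul_one, Nat.cast_add,
    Nat.cast_one]
  exact ENNReal.inv_mul_cancel (by simp) (by simp)

lemma integral_empir (T : X → X) (x : X) (L : ℕ) (f : X → ℝ) (hf : Continuous f) :
    ∫ y, f y ∂(empir T x L) = ((L : ℝ) + 1)⁻¹ * ∑ k ∈ Finset.range (L + 1), f (T^[k] x) := by
  have hlin : ∀ y, Integrable f (Measure.dirac y) := fun y =>
    BoundedContinuousFunction.integrable _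
      (BoundedContinuousFunction.mkOfCompact ⟨f, hf⟩)
  rw [empir, integral_smul_measure, integral_finsetSum_measure (fun i _ => hlin _)]
  simp [ENNReal.toReal_add]

lemma empir_apply (T : X → X) (x : X) (L : ℕ) {B : Set X} (hB : MeasurableSet B) :
    empir T x L B = ENNReal.ofReal ((visits T B (L + 1) x : ℝ) / (L + 1)) := by
  simp only [empir, Measure.smul_apply, Measure.finsetSum_apply, smul_eq_mul]
  rw [ENNReal.ofReal_div_of_pos (by positivity), visits_eq_sum,
    ENNReal.ofReal_sum_of_nonneg (fun i _ => indicator_nonneg (fun _ _ => zero_le_one) _),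
    div_eq_mul_inv, mul_comm]
  congr 1
  · refine Finset.sum_congr rfl fun k _ => ?_
    rw [Measure.dirac_apply' _ hB]
    by_cases h : T^[k] x ∈ B <;> simp [h]
  · congr 1
    rw [ENNReal.ofReal_add (by positivity) zero_le_one]
    simp

lemma exists_invariant {T : X → X} (hT : Continuous T) {B : ℕ → Set X} (hB : ∀ n, IsClosed (B n))
    (hanti : Antitone B) {η : ℝ} (x : ℕ → X)
    (h : ∀ L : ℕ, η * ((L : ℝ) + 1) ≤ visits T (B (L + 1)) (L + 1) (x L)) :
    ∃ ν : Measure X, IsProbabilityMeasure ν ∧ MeasurePreserving T ν ν ∧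
      ENNReal.ofReal η ≤ ν (⋂ n, B n) := by
  let e : ℕ → ProbabilityMeasure X := fun L => ⟨empir T (x L) L, inferInstance⟩
  obtain ⟨ν, -, φ, hφ, hlim⟩ := isCompact_univ.tendsto_subseq (x := e) (fun _ => mem_univ _)
  refine ⟨(ν : Measure X), inferInstance, ⟨hT.measurable, ?_⟩, ?_⟩
  · have : IsProbabilityMeasure (Measure.map T (ν : Measure X)) :=
      Measure.isProbabilityMeasure_map hT.measurable.aemeasurable
    apply ext_of_forall_integral_eq_of_IsFiniteMeasure
    intro f
    rw [integral_map hT.measurable.aemeasurable f.continuous.aestronglyMeasurable]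
    have l1 := (ProbabilityMeasure.tendsto_iff_forall_integral_tendsto.1 hlim) f
    have l2 := (ProbabilityMeasure.tendsto_iff_forall_integral_tendsto.1 hlim)
      (f.compContinuous ⟨T, hT⟩)
    refine tendsto_nhds_unique l2 ?_
    have l3 : Tendsto (fun L : ℕ => ((L : ℝ) + 1)⁻¹ * (f (T^[L + 1] (x L)) - f (x L))) atTop
        (𝓝 0) := by
      rw [← zero_mul (2 * ‖f‖)]
      have hb : Tendsto (fun L : ℕ => ((L : ℝ) + 1)⁻¹ * (2 * ‖f‖)) atTop (𝓝 (0 * (2 * ‖f‖))) := by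
        have := (tendsto_one_div_add_atTop_nhds_zero_nat (𝕜 := ℝ)).mul_const (2 * ‖f‖)
        simpa [one_div] using this
      rw [zero_mul] at hb ⊢
      refine squeeze_zero_norm (fun L => ?_) hb
      rw [norm_mul, Real.norm_of_nonneg (by positivity : 0 ≤ ((L : ℝ) + 1)⁻¹)]
      gcongr
      calc ‖f (T^[L + 1] (x L)) - f (x L)‖ ≤ ‖f (T^[L + 1] (x L))‖ + ‖f (x L)‖ := norm_sub_le _ _
        _ ≤ ‖f‖ + ‖f‖ := add_le_add (f.norm_coe_le_norm _) (f.norm_coe_le_norm _)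
        _ = 2 * ‖f‖ := by ring
    have l4 := l1.add (l3.comp hφ.tendsto_atTop)
    rw [add_zero] at l4
    refine l4.congr fun j => ?_
    change ∫ y, f y ∂(empir T (x (φ j)) (φ j)) + _ = ∫ y, f (T y) ∂(empir T (x (φ j)) (φ j))
    rw [integral_empir T _ _ _ f.continuous,
      integral_empir T _ _ (fun y => f (T y)) (f.continuous.comp hT)]
    simp only [Function.comp_apply]
    rw [← mul_add]
    congr 1
    have h1 := Finset.sum_range_succ (fun k => f (T^[k] (x (φ j)))) (φ j + 1)
    have h2 := Finset.sum_range_succ' (fun k => f (T^[k] (x (φ j)))) (φ j + 1)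
    simp only [Function.iterate_succ_apply', Function.iterate_zero, id] at h1 h2 ⊢
    linarith
  · have hK : ∀ K, ENNReal.ofReal η ≤ (ν : Measure X) (B K) := by
      intro K
      refine le_trans ?_ (ProbabilityMeasure.limsup_measure_closed_le_of_tendsto hlim (hB K))
      refine le_limsup_of_frequently_le (Eventually.frequently ?_)
      filter_upwards [eventually_ge_atTop K] with j hj
      change _ ≤ empir T (x (φ j)) (φ j) (B K)
      rw [empir_apply _ _ _ (hB K).measurableSet]
      apply ENNReal.ofReal_le_ofReal
      rw [le_div_iff₀ (by positivity)]
      refine (h (φ j)).trans ?_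
      have hKj : K ≤ φ j + 1 := (hj.trans hφ.le_apply).trans (Nat.le_succ _)
      exact_mod_cast visits_mono T (hanti hKj) _ _
    have hlimB := tendsto_measure_iInter_atTop (μ := (ν : Measure X)) (s := B)
      (fun n => (hB n).measurableSet.nullMeasurableSet) hanti ⟨0, measure_ne_top _ _⟩
    exact ge_of_tendsto' hlimB hK

end ErgodicExistence

section Basic
variable [MetricSpace X]

lemma dynDist_le {T : X → X} {n : ℕ} {x y : X} {r : ℝ} (hr : 0 ≤ r)
    (h : ∀ k < n, dist (T^[k] x) (T^[k] y) ≤ r) : dynDist T n x y ≤ r := by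
  refine Real.iSup_le (fun k => Real.iSup_le (fun hk => h k (Finset.mem_range.1 hk)) hr) hr

lemma le_dynDist (T : X → X) {n : ℕ} (x y : X) {k : ℕ} (hk : k < n) :
    dist (T^[k] x) (T^[k] y) ≤ dynDist T n x y := by
  have hb : BddAbove (range fun k => ⨆ (_ : k ∈ Finset.range n), dist (T^[k] x) (T^[k] y)) := by
    refine ⟨∑ k ∈ Finset.range n, dist (T^[k] x) (T^[k] y), ?_⟩
    rintro _ ⟨k, rfl⟩
    refine Real.iSup_le (fun hk => ?_) (Finset.sum_nonneg fun i _ => dist_nonneg)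
    exact Finset.single_le_sum (f := fun k => dist (T^[k] x) (T^[k] y))
      (fun i _ => dist_nonneg) hk
  refine le_trans ?_ (le_ciSup hb k)
  have : k ∈ Finset.range n := Finset.mem_range.2 hk
  simp [hk]

lemma dynDist_lt_iff {T : X → X} {n : ℕ} {x y : X} {r : ℝ} (hr : 0 < r) :
    dynDist T n x y < r ↔ ∀ k < n, dist (T^[k] x) (T^[k] y) < r := by
  constructor
  · intro h k hk
    exact (le_dynDist T x y hk).trans_lt h
  · intro h
    rcases Nat.eq_zero_or_pos n with rfl | hn
    · exact (dynDist_le le_rfl (by simp)).trans_lt hr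
    · obtain ⟨k, hk, hmax⟩ := Finset.exists_max_image (Finset.range n)
        (fun k => dist (T^[k] x) (T^[k] y)) ⟨0, Finset.mem_range.2 hn⟩
      refine (dynDist_le dist_nonneg fun j hj => hmax j (Finset.mem_range.2 hj)).trans_lt
        (h k (Finset.mem_range.1 hk))

lemma mem_dynBall {T : X → X} {n : ℕ} {x y : X} {r : ℝ} (hr : 0 < r) :
    y ∈ dynBall T n x r ↔ ∀ k < n, dist (T^[k] x) (T^[k] y) < r :=
  dynDist_lt_iff hr

lemma isOpen_dynBall {T : X → X} (hT : Continuous T) (n : ℕ) (x : X) {r : ℝ} (hr : 0 < r) :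
    IsOpen (dynBall T n x r) := by
  have : dynBall T n x r = ⋂ k ∈ Finset.range n, {y | dist (T^[k] x) (T^[k] y) < r} := by
    ext y
    rw [mem_dynBall hr]
    simp
  rw [this]
  exact isOpen_biInter_finset fun k _ =>
    isOpen_lt (continuous_const.dist (hT.iterate k)) continuous_const

lemma mem_dynBall_self (T : X → X) (n : ℕ) (x : X) {r : ℝ} (hr : 0 < r) : x ∈ dynBall T n x r :=
  (mem_dynBall hr).2 fun k _ => by simpa using hr

lemma DCov.dynBall (T : X → X) (n : ℕ) (x : X) {r : ℝ} (hr : 0 < r) :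
    DCov T (2 * r) n (dynBall T n x r) 1 := by
  refine ⟨{_root_.dynBall T n x r}, by simp, ?_, by simp⟩
  intro S hS a ha b hb k hk
  rw [Finset.mem_singleton] at hS
  subst hS
  have h1 := (mem_dynBall hr).1 ha k hk
  have h2 := (mem_dynBall hr).1 hb k hk
  have := dist_triangle_left (T^[k] a) (T^[k] b) (T^[k] x)
  linarith

lemma exists_finset_dynBall [CompactSpace X] {T : X → X} (hT : Continuous T) (n : ℕ) {r : ℝ}
    (hr : 0 < r) : ∃ F : Finset X, (⋃ x ∈ F, dynBall T n x r) = univ := by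
  obtain ⟨F, hF⟩ := isCompact_univ.elim_finite_subcover (fun x : X => dynBall T n x r)
    (fun x => isOpen_dynBall hT n x hr)
    (fun x _ => mem_iUnion.2 ⟨x, mem_dynBall_self T n x hr⟩)
  exact ⟨F, univ_subset_iff.1 hF⟩

lemma card_le_of_DCov {T : X → X} {ρ : ℝ} {n : ℕ} {m : ℝ} (hρ : 0 ≤ ρ) (h : DCov T ρ n univ m)
    (E : Finset X) (hE : ∀ x ∈ E, ∀ y ∈ E, x ≠ y → ρ < dynDist T n x y) : (E.card : ℝ) ≤ m := by
  obtain ⟨F, h1, h2, h3⟩ := h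
  refine le_trans ?_ h3
  have hex : ∀ x : X, ∃ S ∈ F, x ∈ S := fun x => h1 (mem_univ x)
  choose S hS hxS using hex
  have : E.card ≤ F.card := by
    refine Finset.card_le_card_of_injOn S (fun x _ => hS x) ?_
    intro x hx y hy hxy
    by_contra hne
    have hlt := hE x hx y hy hne
    have := dynDist_le hρ (h2 (S x) (hS x) x (hxS x) y (hxy ▸ hxS y))
    linarith
  exact_mod_cast this

lemma sepNum_le_of_DCov {T : X → X} {ρ : ℝ} {n : ℕ} {m : ℝ} (hρ : 0 ≤ ρ)
    (h : DCov T ρ n univ m) : (sepNum T n univ ρ : ℝ) ≤ m := by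
  have hm : 0 ≤ m := by
    obtain ⟨F, -, -, h3⟩ := h
    exact le_trans (by positivity) h3
  have : sepNum T n univ ρ ≤ ⌊m⌋₊ := by
    apply csSup_le'
    rintro k ⟨E, -, hE, rfl⟩
    exact Nat.le_floor (card_le_of_DCov hρ h E hE)
  exact (Nat.le_floor_iff hm).1 this

lemma bddAbove_sep [CompactSpace X] {T : X → X} (hT : Continuous T) (n : ℕ) {ρ : ℝ}
    (hρ : 0 < ρ) : BddAbove {m | ∃ E : Finset X, ↑E ⊆ (univ : Set X) ∧
    (∀ x ∈ E, ∀ y ∈ E, x ≠ y → ρ < dynDist T n x y) ∧ E.card = m} := by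
  obtain ⟨F, hF⟩ := exists_finset_dynBall hT n (r := ρ / 2) (by linarith)
  have h1 := DCov.biUnion (T := T) (ρ := ρ) (n := n) F (A := fun x => dynBall T n x (ρ / 2))
    (m := fun _ => 1)
    (fun x _ => by simpa [mul_div_cancel₀] using DCov.dynBall T n x (r := ρ / 2) (by linarith))
  rw [hF] at h1
  refine ⟨⌊∑ x ∈ F, (1 : ℝ)⌋₊, ?_⟩
  rintro k ⟨E, -, hE, rfl⟩
  exact Nat.le_floor (card_le_of_DCov hρ.le h1 E hE)

end Basic

section Step
variable [MetricSpace X] [CompactSpace X] [MeasurableSpace X] [BorelSpace X]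

lemma markov_visits {T : X → X} {μ : Measure X} (hμ : MeasurePreserving T μ μ)
    {B : Set X} (hB : MeasurableSet B) {β : ℝ} (hβ : μ B ≤ ENNReal.ofReal β) (N : ℕ) {a : ℝ}
    (ha : 0 < a) :
    μ {x | a ≤ visits T B N x} ≤ ENNReal.ofReal (N * β / a) := by
  have hmeas : ∀ k, Measurable fun x => B.indicator (fun _ => (1 : ENNReal)) (T^[k] x) := fun k =>
    (measurable_const.indicator hB).comp (hμ.measurable.iterate k)
  have heq : ∀ x, (visits T B N x : ENNReal)
      = ∑ k ∈ Finset.range N, B.indicator (fun _ => (1 : ENNReal)) (T^[k] x) := by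
    classical
    intro x
    rw [visits, Finset.card_filter]
    push_cast
    exact Finset.sum_congr rfl fun k _ => by by_cases h : T^[k] x ∈ B <;> simp [h]
  have hlin : ∫⁻ x, (visits T B N x : ENNReal) ∂μ = N * μ B := by
    simp_rw [heq]
    rw [lintegral_finsetSum _ (fun k _ => hmeas k)]
    have : ∀ k ∈ Finset.range N,
        ∫⁻ x, B.indicator (fun _ => (1 : ENNReal)) (T^[k] x) ∂μ = μ B := by
      intro k _
      rw [(hμ.iterate k).lintegral_comp (measurable_const.indicator hB),
        lintegral_indicator_const hB, one_mul]
    rw [Finset.sum_congr rfl this]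
    simp
  have hm := mul_meas_ge_le_lintegral (μ := μ) (f := fun x => (visits T B N x : ENNReal))
    (by simp_rw [heq]; exact Finset.measurable_fun_sum _ fun k _ => hmeas k) (ENNReal.ofReal a)
  rw [hlin] at hm
  have hset : {x | ENNReal.ofReal a ≤ (visits T B N x : ENNReal)} = {x | a ≤ visits T B N x} := by
    ext x
    simp only [mem_setOf_eq]
    rw [← ENNReal.ofReal_natCast, ENNReal.ofReal_le_ofReal_iff (by positivity)]
  rw [hset] at hm
  have ha0 : ENNReal.ofReal a ≠ 0 := by simpa using ha
  rw [ENNReal.ofReal_div_of_pos ha, ENNReal.le_div_iff_mul_le (Or.inl ha0)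
    (Or.inl ENNReal.ofReal_ne_top), mul_comm]
  refine hm.trans ?_
  rw [ENNReal.ofReal_mul (by positivity), ENNReal.ofReal_natCast]
  gcongr

/-- the set of points whose orbit of length `N` is tiled up to a fraction `η` -/
def Phi (T : X → X) (M : ℕ) (η : ℝ) (V : ℕ → Set X) (N : ℕ) : Set X :=
  {x | Tiled T V M N ⌊η * N⌋₊ x}

lemma ergodic_step {T : X → X} (hT : Continuous T) {μ : Measure X} [IsProbabilityMeasure μ]
    (hμ : Ergodic T μ) {P : ℕ → Set X} (hP : ∀ n, IsOpen (P n)) {δ : ℝ} (hδ : 0 < δ) {n₀ : ℕ}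
    (hPδ : ∀ n, n₀ ≤ n → ENNReal.ofReal δ ≤ μ (P n)) (M : ℕ) {η β : ℝ} (hη : 0 < η) (hβ : 0 < β) :
    ∃ K, μ (⋃ N ∈ Finset.Icc M K, Phi T M η P N)ᶜ ≤ ENNReal.ofReal β := by
  let D : ℕ → Set X := fun m => ⋃ n, P (m + n)
  have hD : Antitone D := by
    intro a b hab x hx
    obtain ⟨n, hn⟩ := mem_iUnion.1 hx
    refine mem_iUnion.2 ⟨b - a + n, ?_⟩
    rwa [show a + (b - a + n) = b + n by omega]
  have hDm : ∀ m, MeasurableSet (D m) := fun m => MeasurableSet.iUnion fun n => (hP _).measurableSet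
  let R : Set X := ⋂ m, D m
  have hR : ENNReal.ofReal δ ≤ μ R := by
    have := tendsto_measure_iInter_atTop (μ := μ) (s := D)
      (fun n => (hDm n).nullMeasurableSet) hD ⟨0, measure_ne_top _ _⟩
    refine ge_of_tendsto' this fun m => ?_
    exact (hPδ (m + n₀) (by omega)).trans (measure_mono (subset_iUnion (fun n => P (m + n)) n₀))
  have hRm : MeasurableSet R := MeasurableSet.iInter hDm
  let A : Set X := ⋃ j : ℕ, T^[j] ⁻¹' R
  have hAm : MeasurableSet A := MeasurableSet.iUnion fun j => (hT.measurable.iterate j) hRm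
  have hTA : T ⁻¹' A ⊆ A := by
    intro x hx
    obtain ⟨j, hj⟩ := mem_iUnion.1 hx
    exact mem_iUnion.2 ⟨j + 1, hj⟩
  have hA1 : A =ᵐ[μ] univ := by
    rcases hμ.ae_empty_or_univ_of_preimage_ae_le hAm.nullMeasurableSet
      (HasSubset.Subset.eventuallyLE hTA) with h | h
    · exfalso
      have h0 : μ A = 0 := by rw [measure_congr h, measure_empty]
      have : ENNReal.ofReal δ ≤ 0 := h0 ▸ hR.trans (measure_mono fun x hx => mem_iUnion.2 ⟨0, hx⟩)
      have h2 : 0 < ENNReal.ofReal δ := ENNReal.ofReal_pos.2 hδ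
      exact absurd this (not_le.2 h2)
    · exact h
  have hopen : ∀ N, IsOpen (Phi T M η P N) := fun N => Tiled.isOpen hT hP _ _ _
  let O : ℕ → Set X := fun K => ⋃ N ∈ Finset.Icc M K, Phi T M η P N
  have hO : ∀ K, IsOpen (O K) := fun K => isOpen_biUnion fun N _ => hopen N
  have hAO : A ⊆ ⋃ K, O K := by
    intro x hx
    obtain ⟨j, hj⟩ := mem_iUnion.1 hx
    obtain ⟨m, hm⟩ := exists_nat_ge ((j : ℝ) / η)
    have h1 := mem_iInter.1 hj (m + M)
    obtain ⟨n, hn⟩ := mem_iUnion.1 h1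
    have h2 := Tiled.shift (T := T) (V := P) (M := M) j (m + M + n) (x := x) (by omega) hn
    refine mem_iUnion.2 ⟨m + M + n + j, ?_⟩
    simp only [O, mem_iUnion]
    refine ⟨m + M + n + j, Finset.mem_Icc.2 ⟨by omega, le_rfl⟩, h2.mono ?_⟩
    apply Nat.le_floor
    rw [div_le_iff₀ hη] at hm
    have : (m : ℝ) ≤ ((m + M + n + j : ℕ) : ℝ) := by exact_mod_cast (by omega)
    nlinarith
  have hanti : Antitone fun K => (O K)ᶜ := by
    intro a b hab
    apply compl_subset_compl.2
    intro x hx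
    simp only [O, mem_iUnion] at hx ⊢
    obtain ⟨N, hN, hx⟩ := hx
    rw [Finset.mem_Icc] at hN
    exact ⟨N, Finset.mem_Icc.2 ⟨hN.1, hN.2.trans hab⟩, hx⟩
  have hlim := tendsto_measure_iInter_atTop (μ := μ) (s := fun K => (O K)ᶜ)
    (fun n => (hO n).measurableSet.compl.nullMeasurableSet) hanti ⟨0, measure_ne_top _ _⟩
  have hz : μ (⋂ K, (O K)ᶜ) = 0 := by
    rw [← compl_iUnion]
    refine measure_mono_null (compl_subset_compl.2 hAO) ?_
    exact (ae_eq_univ.1 hA1)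
  rw [hz] at hlim
  obtain ⟨K, hK⟩ := (hlim.eventually_lt_const (ENNReal.ofReal_pos.2 hβ)).exists
  exact ⟨K, hK.le⟩

lemma markov_step {T : X → X} (hT : Continuous T) {μ : Measure X}
    (hμ : MeasurePreserving T μ μ) {V : ℕ → Set X} (hV : ∀ n, IsOpen (V n)) {M K : ℕ} (hM : 1 ≤ M)
    {η : ℝ} (hη : 0 < η)
    (hK : μ (⋃ N ∈ Finset.Icc M K, V N)ᶜ ≤ ENNReal.ofReal (η ^ 2 / 4)) {N : ℕ} (hN : 1 ≤ N)
    (hNK : (K : ℝ) ≤ η * N / 2) :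
    μ (Phi T M η V N)ᶜ ≤ ENNReal.ofReal (η / 2) := by
  have hm := markov_visits hμ (isOpen_biUnion fun N _ => hV N).measurableSet.compl hK N
    (a := η * N / 2) (by positivity)
  have e : (N : ℝ) * (η ^ 2 / 4) / (η * N / 2) = η / 2 := by
    have : (N : ℝ) ≠ 0 := by positivity
    field_simp
    ring
  rw [e] at hm
  refine (measure_mono ?_).trans hm
  intro x hx
  by_contra hlt
  apply hx
  simp only [mem_setOf_eq, not_le] at hlt
  refine (Tiled.greedy T V (K := K) hM N x).mono (Nat.le_floor ?_)
  rw [Nat.cast_add]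
  have hlt2 : (visits T (⋃ N ∈ Finset.Icc M K, V N)ᶜ N x : ℝ) < η * N / 2 := hlt
  linarith

end Step

section Key
variable [MetricSpace X] [CompactSpace X]

lemma Phi_cov {T : X → X} {V : ℕ → Set X} {M : ℕ} (hM : 1 ≤ M) {ρ C s γ η : ℝ} (hs : 0 ≤ s)
    (hγ : 0 < γ) (hC : 1 ≤ C) (hη : 0 ≤ η) (hηC : η * Real.log (2 * C) ≤ γ)
    (hCov : DCov T ρ 1 univ C)
    (hgeo : ∀ n : ℕ, ∑ N ∈ Finset.Icc M n, Real.exp (-(γ * N)) ≤ 1 / 2)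
    (hV : ∀ N, M ≤ N → DCov T ρ N (V N) (Real.exp (s * N))) (N : ℕ) :
    DCov T ρ N (Phi T M η V N) (Real.exp ((s + 2 * γ) * N)) := by
  refine (Tiled.cov hM hs hγ hC hCov hgeo hV N _).mono subset_rfl ?_
  have h1 : (2 * C) ^ ⌊η * N⌋₊ = Real.exp (⌊η * N⌋₊ * Real.log (2 * C)) := by
    rw [Real.exp_nat_mul, Real.exp_log (by linarith)]
  rw [h1, ← Real.exp_add]
  apply Real.exp_le_exp.2
  have hl : 0 ≤ Real.log (2 * C) := Real.log_nonneg (by linarith)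
  have h2 : (⌊η * N⌋₊ : ℝ) ≤ η * N := Nat.floor_le (by positivity)
  have h3 := mul_le_mul_of_nonneg_right h2 hl
  have h4 : η * Real.log (2 * C) * N ≤ γ * N := mul_le_mul_of_nonneg_right hηC (by positivity)
  nlinarith

lemma exists_M {γ : ℝ} (hγ : 0 < γ) : ∃ M : ℕ, 1 ≤ M ∧
    (∀ n : ℕ, ∑ N ∈ Finset.Icc M n, Real.exp (-(γ * N)) ≤ 1 / 2) ∧
    (∀ N : ℕ, M ≤ N → (N : ℝ) + 1 ≤ Real.exp (γ * N)) := by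
  have hsum : Summable fun N : ℕ => Real.exp (-(γ * N)) := by
    have := Real.summable_exp_nat_mul_iff (a := -γ) |>.2 (by linarith)
    refine this.congr fun n => ?_
    ring_nf
  have h1 := (tendsto_sum_nat_add fun N : ℕ => Real.exp (-(γ * N)))
  have h2 : ∀ᶠ M : ℕ in atTop, ∑' k : ℕ, Real.exp (-(γ * ((k + M : ℕ) : ℝ))) < 1 / 2 :=
    h1.eventually_lt_const (by norm_num)
  have h3 : ∀ᶠ N : ℕ in atTop, (N : ℝ) + 1 ≤ Real.exp (γ * N) := by
    obtain ⟨m, hm⟩ := exists_nat_ge (4 / γ ^ 2)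
    filter_upwards [eventually_ge_atTop (m + 1)] with N hN
    have hq := Real.quadratic_le_exp_of_nonneg (x := γ * N) (by positivity)
    have hN' : 4 / γ ^ 2 ≤ (N : ℝ) := hm.trans (by exact_mod_cast (by omega))
    have hN1 : (1 : ℝ) ≤ N := by exact_mod_cast (by omega)
    rw [div_le_iff₀ (by positivity)] at hN'
    have : 0 < γ * N := by positivity
    nlinarith
  obtain ⟨M, hM⟩ := (h2.and ((eventually_forall_ge_atTop.2 h3).and (eventually_ge_atTop 1))).exists
  refine ⟨M, hM.2.2, fun n => ?_, hM.2.1⟩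
  refine le_trans ?_ hM.1.le
  rcases lt_or_ge n M with h | h
  · rw [Finset.Icc_eq_empty (by omega), Finset.sum_empty]
    exact tsum_nonneg fun _ => (Real.exp_pos _).le
  · have : Finset.Icc M n = (Finset.range (n + 1 - M)).image (fun k => k + M) := by
      ext k
      simp only [Finset.mem_Icc, Finset.mem_image, Finset.mem_range]
      constructor
      · intro hk
        exact ⟨k - M, by omega, by omega⟩
      · rintro ⟨j, hj, rfl⟩
        omega
    rw [this, Finset.sum_image (fun a _ b _ hab => by simpa using hab)]
    refine Summable.sum_le_tsum (f := fun k : ℕ => Real.exp (-(γ * ((k + M : ℕ) : ℝ)))) _ (fun _ _ => (Real.exp_pos _).le) ?_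
    exact (summable_nat_add_iff M (f := fun N : ℕ => Real.exp (-(γ * N)))).2 hsum

/-- union of dynamical balls described by finite data -/
def PT (T : X → X) (u : ℕ → X) (ε : ℝ) (τ : List (Finset ℕ)) (n : ℕ) : Set X :=
  ⋃ i ∈ τ.getD n ∅, dynBall T n (u i) (2 * ε)

lemma PT_open {T : X → X} (hT : Continuous T) (u : ℕ → X) {ε : ℝ} (hε : 0 < ε)
    (τ : List (Finset ℕ)) (n : ℕ) : IsOpen (PT T u ε τ n) :=
  isOpen_biUnion fun i _ => isOpen_dynBall hT n _ (by linarith)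

lemma PT_cov {T : X → X} (u : ℕ → X) {ε : ℝ} (hε : 0 < ε)
    (τ : List (Finset ℕ)) (n : ℕ) : DCov T (4 * ε) n (PT T u ε τ n) ((τ.getD n ∅).card) := by
  have := DCov.biUnion (T := T) (ρ := 4 * ε) (n := n) (τ.getD n ∅)
    (A := fun i => dynBall T n (u i) (2 * ε)) (m := fun _ => 1) (fun i _ => by
      have := DCov.dynBall T n (u i) (r := 2 * ε) (by linarith)
      rwa [show 2 * (2 * ε) = 4 * ε by ring] at this)
  simpa [PT] using this

/-- balls around arbitrary centres are contained in balls around the dense sequence -/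
lemma ball_dense [Nonempty X] {T : X → X} (hT : Continuous T) {u : ℕ → X} (hu : DenseRange u)
    {ε : ℝ} (hε : 0 < ε) (n : ℕ) (F : Finset X) : ∃ G : Finset ℕ, G.card ≤ F.card ∧
    (⋃ x ∈ F, dynBall T n x ε) ⊆ ⋃ i ∈ G, dynBall T n (u i) (2 * ε) := by
  classical
  have hex : ∀ x : X, ∃ i, u i ∈ dynBall T n x ε := fun x => by
    exact hu.exists_mem_open (isOpen_dynBall hT n x hε) ⟨x, mem_dynBall_self T n x hε⟩
  choose g hg using hex
  refine ⟨F.image g, Finset.card_image_le, ?_⟩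
  refine iUnion₂_subset fun x hx y hy => ?_
  refine mem_iUnion₂.2 ⟨g x, Finset.mem_image_of_mem g hx, ?_⟩
  rw [mem_dynBall (by linarith)]
  intro k hk
  have h1 := (mem_dynBall hε).1 (hg x) k hk
  have h2 := (mem_dynBall hε).1 hy k hk
  have := dist_triangle_left (T^[k] (u (g x))) (T^[k] y) (T^[k] x)
  linarith

end Key

section KeyM
variable [MetricSpace X] [CompactSpace X] [MeasurableSpace X] [BorelSpace X]

lemma katokNum_spec {T : X → X} (hT : Continuous T) (μ : Measure X) [IsProbabilityMeasure μ]
    {ε δ : ℝ} (hε : 0 < ε) (hδ1 : δ < 1) (n : ℕ) :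
    ∃ F : Finset X, ENNReal.ofReal δ < μ (⋃ x ∈ F, dynBall T n x ε) ∧
      F.card = katokNum T μ n ε δ := by
  have hne : {m | ∃ F : Finset X, ENNReal.ofReal δ < μ (⋃ x ∈ F, dynBall T n x ε) ∧
      F.card = m}.Nonempty := by
    obtain ⟨F, hF⟩ := exists_finset_dynBall hT n hε
    refine ⟨F.card, F, ?_, rfl⟩
    rw [hF, measure_univ]
    exact ENNReal.ofReal_lt_one.2 hδ1
  exact Nat.sInf_mem hne

lemma katok_eventually {T : X → X} {μ : Measure X} {ε δ s : ℝ} (h : katokEnt T μ ε δ < s) :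
    ∃ n₀ : ℕ, ∀ n, n₀ ≤ n → (katokNum T μ n ε δ : ℝ) ≤ Real.exp (s * n) := by
  have h1 := eventually_lt_of_limsup_lt h
  obtain ⟨n₀, hn₀⟩ := eventually_atTop.1 (h1.and (eventually_ge_atTop 1))
  refine ⟨n₀, fun n hn => ?_⟩
  obtain ⟨h2, h3⟩ := hn₀ n hn
  have h2' : Real.log (katokNum T μ n ε δ) / n < s := by exact_mod_cast h2
  rw [div_lt_iff₀ (by exact_mod_cast h3)] at h2'
  rcases Nat.eq_zero_or_pos (katokNum T μ n ε δ) with h0 | h0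
  · rw [h0]; simpa using (Real.exp_pos _).le
  · rw [← Real.exp_log (by exact_mod_cast h0 : (0:ℝ) < katokNum T μ n ε δ)]
    exact Real.exp_le_exp.2 h2'.le

lemma exists_type [Nonempty X] {T : X → X} (hT : Continuous T) {u : ℕ → X} (hu : DenseRange u)
    {μ : Measure X} [IsProbabilityMeasure μ] (hμ : Ergodic T μ) {ε δ s : ℝ} (hε : 0 < ε)
    (hδ : 0 < δ) (hδ1 : δ < 1) (h : katokEnt T μ ε δ < s) {M : ℕ} (hM : 1 ≤ M) {η : ℝ}
    (hη : 0 < η) :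
    ∃ τ : List (Finset ℕ), (∀ n, ((τ.getD n ∅).card : ℝ) ≤ Real.exp (s * n)) ∧
      ∃ N₀ : ℕ, ∀ N, N₀ ≤ N →
        μ (Phi T M η (Phi T M η (PT T u ε τ)) N)ᶜ ≤ ENNReal.ofReal (η / 2) := by
  classical
  obtain ⟨n₀, hn₀⟩ := katok_eventually h
  have hex : ∀ n : ℕ, ∃ G : Finset ℕ, (G.card : ℝ) ≤ Real.exp (s * n) ∧
      (n₀ ≤ n → ENNReal.ofReal δ ≤ μ (⋃ i ∈ G, dynBall T n (u i) (2 * ε))) := by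
    intro n
    by_cases hn : n₀ ≤ n
    · obtain ⟨F, hF, hcard⟩ := katokNum_spec hT μ hε hδ1 n
      obtain ⟨G, hG, hsub⟩ := ball_dense hT hu hε n F
      refine ⟨G, ?_, fun _ => hF.le.trans (measure_mono hsub)⟩
      refine le_trans ?_ (hn₀ n hn)
      rw [← hcard]
      exact_mod_cast hG
    · exact ⟨∅, by simpa using (Real.exp_pos _).le, fun h => absurd h hn⟩
  choose G hG1 hG2 using hex
  let P : ℕ → Set X := fun n => ⋃ i ∈ G n, dynBall T n (u i) (2 * ε)
  have hP : ∀ n, IsOpen (P n) := fun n => isOpen_biUnion fun i _ => isOpen_dynBall hT n _ (by linarith)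
  obtain ⟨K, hK⟩ := ergodic_step hT hμ hP hδ (n₀ := n₀) hG2 M hη (β := η ^ 2 / 4) (by positivity)
  let τ : List (Finset ℕ) := (List.range (K + 1)).map G
  have hτ : ∀ n, n ≤ K → τ.getD n ∅ = G n := by
    intro n hn
    have : n < K + 1 := by omega
    simp [τ, List.getD_eq_getElem?_getD, this]
  have hτ' : ∀ n, ¬ n ≤ K → τ.getD n ∅ = ∅ := by
    intro n hn
    have : ¬ n < K + 1 := by omega
    simp [τ, List.getD_eq_getElem?_getD, this]
  refine ⟨τ, fun n => ?_, ?_⟩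
  · by_cases hn : n ≤ K
    · rw [hτ n hn]; exact hG1 n
    · rw [hτ' n hn]; simpa using (Real.exp_pos _).le
  · obtain ⟨N₀, hN₀⟩ := exists_nat_ge (2 * K / η)
    refine ⟨N₀ + 1, fun N hN => ?_⟩
    refine markov_step hT hμ.toMeasurePreserving (V := Phi T M η (PT T u ε τ))
      (fun n => Tiled.isOpen hT (PT_open hT u hε τ) _ _ _) (K := K) hM hη ?_ (by omega) ?_
    · refine (measure_mono (compl_subset_compl.2 ?_)).trans hK
      refine iUnion₂_mono fun N hN x hx => ?_
      refine Tiled.monoV hx fun j _ hj => ?_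
      rw [Finset.mem_Icc] at hN
      simp only [P, PT]
      rw [hτ j (hj.trans hN.2)]
    · have : 2 * (K : ℝ) / η ≤ N := hN₀.trans (by exact_mod_cast (by omega))
      rw [div_le_iff₀ hη] at this
      linarith

theorem key_cov [Nonempty X] {T : X → X} (hT : Continuous T) {ε δ s : ℝ} (hε : 0 < ε)
    (hδ : 0 < δ) (hδ1 : δ < 1) (hs : 0 ≤ s)
    (h : ∀ μ ∈ ergodicMeasures T, katokEnt T μ ε δ < s) {γ : ℝ} (hγ : 0 < γ) :
    ∃ D : ℝ, 1 ≤ D ∧ ∀ n : ℕ, DCov T (4 * ε) n univ (D * Real.exp ((s + 7 * γ) * n)) := by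
  obtain ⟨M, hM, hgeo, hexp⟩ := exists_M hγ
  obtain ⟨C, hC, hCov⟩ : ∃ C : ℝ, 1 ≤ C ∧ DCov T (4 * ε) 1 univ C := by
    obtain ⟨F, hF⟩ := exists_finset_dynBall hT 1 (r := 2 * ε) (by linarith)
    have h1 := DCov.biUnion (T := T) (ρ := 4 * ε) (n := 1) F (A := fun x => dynBall T 1 x (2 * ε))
      (m := fun _ => 1) (fun x _ => by
        have := DCov.dynBall T 1 x (r := 2 * ε) (by linarith)
        rwa [show 2 * (2 * ε) = 4 * ε by ring] at this)
    rw [hF] at h1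
    exact ⟨_, le_max_left 1 _, h1.mono subset_rfl (le_max_right _ _)⟩
  have hl : 0 < Real.log (2 * C) := Real.log_pos (by linarith)
  obtain ⟨η, hη, hηC⟩ : ∃ η : ℝ, 0 < η ∧ η * Real.log (2 * C) ≤ γ :=
    ⟨γ / Real.log (2 * C), by positivity, by rw [div_mul_cancel₀ _ hl.ne']⟩
  let u : ℕ → X := TopologicalSpace.denseSeq X
  have hu : DenseRange u := TopologicalSpace.denseRange_denseSeq X
  let Ty := {τ : List (Finset ℕ) // ∀ n, ((τ.getD n ∅).card : ℝ) ≤ Real.exp (s * n)}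
  haveI : Nonempty Ty := ⟨⟨[], fun n => by simpa using (Real.exp_pos _).le⟩⟩
  obtain ⟨e, he⟩ := exists_surjective_nat Ty
  let W : ℕ → ℕ → Set X := fun i => Phi T M η (Phi T M η (PT T u ε (e i).1))
  have hWo : ∀ i N, IsOpen (W i N) := fun i N =>
    Tiled.isOpen hT (fun n => Tiled.isOpen hT (PT_open hT u hε _) _ _ _) _ _ _
  have hWc : ∀ i N, DCov T (4 * ε) N (W i N) (Real.exp ((s + 2 * γ + 2 * γ) * N)) := by
    intro i N
    refine Phi_cov hM (by linarith) hγ hC hη.le hηC hCov hgeo (fun N _ => ?_) N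
    refine Phi_cov hM hs hγ hC hη.le hηC hCov hgeo (fun N _ => ?_) N
    exact (PT_cov u hε _ N).mono subset_rfl ((e i).2 N)
  let G : ℕ → Set X := fun N => ⋃ i ∈ Finset.range (N + 1), W i N
  have hGo : ∀ N, IsOpen (G N) := fun N => isOpen_biUnion fun i _ => hWo i N
  have hGc : ∀ N, M ≤ N → DCov T (4 * ε) N (G N) (Real.exp ((s + 5 * γ) * N)) := by
    intro N hN
    refine (DCov.biUnion (Finset.range (N + 1)) fun i _ => hWc i N).mono subset_rfl ?_
    rw [Finset.sum_const, Finset.card_range, nsmul_eq_mul]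
    push_cast
    calc ((N : ℝ) + 1) * Real.exp ((s + 2 * γ + 2 * γ) * N)
        ≤ Real.exp (γ * N) * Real.exp ((s + 2 * γ + 2 * γ) * N) := by
          gcongr; exact hexp N hN
      _ = _ := by rw [← Real.exp_add]; ring_nf
  let B : ℕ → Set X := fun n => (⋃ N ∈ Finset.Icc M n, G N)ᶜ
  have hBc : ∀ n, IsClosed (B n) := fun n =>
    (isOpen_biUnion fun N _ => hGo N).isClosed_compl
  have hBa : Antitone B := by
    intro a b hab
    apply compl_subset_compl.2
    refine iUnion₂_subset fun N hN => ?_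
    rw [Finset.mem_Icc] at hN
    exact subset_biUnion_of_mem (u := G) (Finset.mem_coe.2 (Finset.mem_Icc.2 ⟨hN.1, hN.2.trans hab⟩))
  obtain ⟨L, hL, hLx⟩ : ∃ L : ℕ, 1 ≤ L ∧ ∀ x, (visits T (B L) L x : ℝ) ≤ η * L := by
    by_contra hcon
    push Not at hcon
    have hx : ∀ L : ℕ, ∃ x, η * ((L : ℝ) + 1) ≤ visits T (B (L + 1)) (L + 1) x := by
      intro L
      obtain ⟨x, hx⟩ := hcon (L + 1) (by omega)
      exact ⟨x, by push_cast at hx; exact hx.le⟩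
    choose x hx using hx
    obtain ⟨ν, hνp, hν, hνB⟩ := exists_invariant hT hBc hBa x hx
    obtain ⟨μ, hμ, hμA⟩ := exists_ergodic_ge hT (isClosed_iInter hBc) ν hν
    haveI := hμ.1
    obtain ⟨τ, hτ, N₀, hN₀⟩ := exists_type hT hu hμ.2 hε hδ hδ1 (h μ hμ) hM hη
    obtain ⟨i, hi⟩ := he ⟨τ, hτ⟩
    let N := N₀ + M + i
    have h1 : (⋂ n, B n) ⊆ (W i N)ᶜ := by
      refine (iInter_subset B N).trans (compl_subset_compl.2 ?_)
      have h2 : W i N ⊆ G N := subset_biUnion_of_mem (u := fun i => W i N)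
        (Finset.mem_coe.2 (Finset.mem_range.2 (by omega)))
      exact h2.trans (subset_biUnion_of_mem (u := G)
        (Finset.mem_coe.2 (Finset.mem_Icc.2 ⟨by omega, le_rfl⟩)))
    have h3 : μ (W i N)ᶜ ≤ ENNReal.ofReal (η / 2) := by
      have := hN₀ N (by omega)
      simpa only [W, hi] using this
    have h4 := (hνB.trans hμA).trans ((measure_mono h1).trans h3)
    rw [ENNReal.ofReal_le_ofReal_iff (by positivity)] at h4
    linarith
  refine ⟨(2 * C) ^ (2 * L), one_le_pow₀ (by linarith), fun n => ?_⟩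
  have hc := Tiled.cov hM (by linarith : 0 ≤ s + 5 * γ) hγ hC hCov hgeo hGc n (⌊η * n⌋₊ + 2 * L)
  refine hc.mono ?_ ?_
  · intro x _
    have h1 := Tiled.greedy T G (K := L) hM n x
    refine h1.mono ?_
    have h2 := visits_uniform T _ hL hη.le hLx n x
    have h3 : visits T (B L) n x - L ≤ ⌊η * n⌋₊ := by
      apply Nat.le_floor
      rcases le_total L (visits T (B L) n x) with hh | hh
      · rw [Nat.cast_sub hh]; linarith
      · rw [Nat.sub_eq_zero_of_le hh]; simp; positivity
    change visits T (B L) n x + L ≤ _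
    omega
  · rw [pow_add, mul_comm ((2 * C) ^ ⌊η * n⌋₊), mul_assoc]
    refine mul_le_mul_of_nonneg_left ?_ (by positivity)
    have h1 : (2 * C) ^ ⌊η * n⌋₊ = Real.exp (⌊η * n⌋₊ * Real.log (2 * C)) := by
      rw [Real.exp_nat_mul, Real.exp_log (by linarith)]
    rw [h1, ← Real.exp_add]
    apply Real.exp_le_exp.2
    have h2 : (⌊η * n⌋₊ : ℝ) ≤ η * n := Nat.floor_le (by positivity)
    have h3 := mul_le_mul_of_nonneg_right h2 hl.le
    have h4 : η * Real.log (2 * C) * n ≤ γ * n := mul_le_mul_of_nonneg_right hηC (by positivity)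
    nlinarith

end KeyM

lemma limsup_compare {f g : ℝ → EReal} (hg : ∀ ε, 0 < ε → 0 ≤ g ε) {c : ℝ} (hc : 0 < c)
    (hc1 : c < 1) (h : ∀ ε, 0 < ε → f ε ≤ g (c * ε)) :
    limsup (fun ε : ℝ => f ε / ((Real.log (1 / ε) : ℝ) : EReal)) (𝓝[>] (0:ℝ)) ≤
    limsup (fun ε : ℝ => g ε / ((Real.log (1 / ε) : ℝ) : EReal)) (𝓝[>] (0:ℝ)) := by
  rw [← EReal.le_of_forall_lt_iff_le]
  intro b hb
  obtain ⟨b₀, hb₀, hb₀b⟩ := EReal.lt_iff_exists_real_btwn.1 hb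
  have hbb : b₀ < b := by exact_mod_cast hb₀b
  have h1 := eventually_lt_of_limsup_lt hb₀
  have hpos : ∀ᶠ ε : ℝ in 𝓝[>] (0:ℝ), 0 < ε := self_mem_nhdsWithin
  have hlog : Tendsto (fun ε : ℝ => Real.log (1 / ε)) (𝓝[>] (0:ℝ)) atTop := by
    simp only [one_div]
    exact Real.tendsto_log_atTop.comp tendsto_inv_nhdsGT_zero
  have h2 : ∀ᶠ ε : ℝ in 𝓝[>] (0:ℝ), g ε ≤ ((b₀ * Real.log (1 / ε) : ℝ) : EReal) := by
    filter_upwards [h1, hlog.eventually_gt_atTop 0] with ε hε hl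
    rw [EReal.div_lt_iff (by exact_mod_cast hl) (EReal.coe_ne_top _)] at hε
    rw [EReal.coe_mul]
    exact hε.le
  have hb0 : 0 ≤ b₀ := by
    obtain ⟨ε, h3, h4, h5⟩ := (h2.and ((hlog.eventually_gt_atTop 0).and hpos)).exists
    have : (0 : EReal) ≤ ((b₀ * Real.log (1 / ε) : ℝ) : EReal) := (hg ε h5).trans h3
    have : 0 ≤ b₀ * Real.log (1 / ε) := by exact_mod_cast this
    exact nonneg_of_mul_nonneg_left this h4
  have hcm : Tendsto (fun ε : ℝ => c * ε) (𝓝[>] (0:ℝ)) (𝓝[>] (0:ℝ)) := by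
    refine tendsto_nhdsWithin_iff.2 ⟨?_, ?_⟩
    · have : Tendsto (fun ε : ℝ => c * ε) (𝓝 0) (𝓝 (c * 0)) := tendsto_id.const_mul c
      rw [mul_zero] at this
      exact this.mono_left nhdsWithin_le_nhds
    · filter_upwards [hpos] with ε hε
      exact mul_pos hc hε
  refine limsup_le_of_le (by isBoundedDefault) ?_
  filter_upwards [hcm.eventually h2, hpos, hlog.eventually_gt_atTop 0,
    hlog.eventually_ge_atTop (b₀ * Real.log (1 / c) / (b - b₀))] with ε h3 h4 h5 h6
  rw [EReal.div_le_iff_le_mul (by exact_mod_cast h5) (EReal.coe_ne_top _), ← EReal.coe_mul]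
  refine (h ε h4).trans (h3.trans ?_)
  rw [EReal.coe_le_coe_iff]
  have e : Real.log (1 / (c * ε)) = Real.log (1 / c) + Real.log (1 / ε) := by
    rw [← Real.log_mul (by positivity) (by positivity)]
    congr 1
    field_simp
  rw [e]
  rw [div_le_iff₀ (by linarith)] at h6
  nlinarith

section Final
variable [MetricSpace X] [CompactSpace X] [Nonempty X] [MeasurableSpace X] [BorelSpace X]

lemma sepEnt_le_of_katok {T : X → X} (hT : Continuous T) {ε δ s : ℝ} (hε : 0 < ε)
    (hδ : 0 < δ) (hδ1 : δ < 1) (hs : 0 ≤ s)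
    (h : ∀ μ ∈ ergodicMeasures T, katokEnt T μ ε δ < s) : sepEnt T univ (4 * ε) ≤ s := by
  rw [← EReal.le_of_forall_lt_iff_le]
  intro b hb
  have hb' : s < b := by exact_mod_cast hb
  obtain ⟨D, hD, hcov⟩ := key_cov hT hε hδ hδ1 hs h (γ := (b - s) / 8) (by linarith)
  refine limsup_le_of_le (by isBoundedDefault) ?_
  obtain ⟨m, hm⟩ := exists_nat_ge (Real.log D / ((b - s) / 8))
  filter_upwards [eventually_ge_atTop (m + 1)] with n hn
  rw [EReal.coe_le_coe_iff]
  have hn0 : (0 : ℝ) < n := by exact_mod_cast (by omega)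
  rw [div_le_iff₀ hn0]
  have h1 := sepNum_le_of_DCov (by linarith) (hcov n)
  have hDn : Real.log D ≤ (b - s) / 8 * n := by
    have : Real.log D / ((b - s) / 8) ≤ n := hm.trans (by exact_mod_cast (by omega))
    rw [div_le_iff₀ (by linarith)] at this
    linarith
  rcases Nat.eq_zero_or_pos (sepNum T n univ (4 * ε)) with h0 | h0
  · rw [h0]; simp; nlinarith
  · have h2 := Real.log_le_log (by exact_mod_cast h0) h1
    rw [Real.log_mul (by linarith) (Real.exp_pos _).ne', Real.log_exp] at h2
    nlinarith

lemma ergodic_nonempty {T : X → X} (hT : Continuous T) : ∃ μ, μ ∈ ergodicMeasures T := by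
  obtain ⟨x₀⟩ := ‹Nonempty X›
  obtain ⟨ν, hp, hν, -⟩ := exists_invariant hT (B := fun _ => univ) (η := 0)
    (fun _ => isClosed_univ) (fun _ _ _ => le_rfl) (fun _ => x₀) (fun L => by
      rw [zero_mul]; positivity)
  obtain ⟨μ, hμ, -⟩ := exists_ergodic_ge hT isClosed_univ ν hν
  exact ⟨μ, hμ⟩

lemma katokEnt_nonneg (T : X → X) (μ : Measure X) (ε δ : ℝ) : 0 ≤ katokEnt T μ ε δ := by
  refine le_limsup_of_frequently_le (Frequently.of_forall fun n => ?_) (by isBoundedDefault)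
  exact_mod_cast div_nonneg (Real.log_natCast_nonneg _) (Nat.cast_nonneg n)

lemma sepEnt_nonneg (T : X → X) (ε : ℝ) : 0 ≤ sepEnt T univ ε := by
  refine le_limsup_of_frequently_le (Frequently.of_forall fun n => ?_) (by isBoundedDefault)
  exact_mod_cast div_nonneg (Real.log_natCast_nonneg _) (Nat.cast_nonneg n)

lemma sup_nonneg {T : X → X} (hT : Continuous T) (ε δ : ℝ) :
    0 ≤ ⨆ μ ∈ ergodicMeasures T, katokEnt T μ ε δ := by
  obtain ⟨μ, hμ⟩ := ergodic_nonempty hT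
  exact (katokEnt_nonneg T μ ε δ).trans (le_iSup₂ (f := fun μ _ => katokEnt T μ ε δ) μ hμ)

lemma sepEnt_le_sup {T : X → X} (hT : Continuous T) {ε δ : ℝ} (hε : 0 < ε)
    (hδ : 0 < δ) (hδ1 : δ < 1) :
    sepEnt T univ (4 * ε) ≤ ⨆ μ ∈ ergodicMeasures T, katokEnt T μ ε δ := by
  rw [← EReal.le_of_forall_lt_iff_le]
  intro s hs
  refine sepEnt_le_of_katok hT hε hδ hδ1 ?_ fun μ hμ =>
    (le_iSup₂ (f := fun μ _ => katokEnt T μ ε δ) μ hμ).trans_lt hs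
  have := (sup_nonneg hT ε δ).trans hs.le
  exact_mod_cast this

lemma katokEnt_le_sepEnt {T : X → X} (hT : Continuous T) (μ : Measure X) [IsProbabilityMeasure μ]
    {ε δ : ℝ} (hε : 0 < ε) (hδ1 : δ < 1) :
    katokEnt T μ ε δ ≤ sepEnt T univ (ε / 2) := by
  classical
  refine limsup_le_limsup (Eventually.of_forall fun n => ?_) (by isBoundedDefault)
    (by isBoundedDefault)
  have hbdd := bddAbove_sep hT n (ρ := ε / 2) (by linarith)
  obtain ⟨E, -, hE, hcard⟩ := Nat.sSup_mem (s := {m | ∃ E : Finset X, ↑E ⊆ (univ : Set X) ∧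
    (∀ x ∈ E, ∀ y ∈ E, x ≠ y → ε / 2 < dynDist T n x y) ∧ E.card = m}) ⟨0, ∅, by simp⟩ hbdd
  have hsymm : ∀ x y, dynDist T n x y = dynDist T n y x := fun x y => by
    simp only [dynDist, dist_comm]
  have hcov : (⋃ x ∈ E, dynBall T n x ε) = univ := by
    rw [eq_univ_iff_forall]
    intro y
    by_contra hy
    have hy' : ∀ x ∈ E, ε ≤ dynDist T n x y := by
      intro x hx
      by_contra hlt
      exact hy (mem_iUnion₂.2 ⟨x, hx, not_le.1 hlt⟩)
    have hyE : y ∉ E := fun h => hy (mem_iUnion₂.2 ⟨y, h, mem_dynBall_self T n y hε⟩)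
    have := le_csSup hbdd (show (insert y E).card ∈ _ from ⟨insert y E, subset_univ _, ?_, rfl⟩)
    · rw [Finset.card_insert_of_notMem hyE] at this
      omega
    · intro a ha b hb hab
      rcases Finset.mem_insert.1 ha with rfl | ha' <;> rcases Finset.mem_insert.1 hb with rfl | hb'
      · exact absurd rfl hab
      · rw [hsymm]; linarith [hy' b hb']
      · linarith [hy' a ha']
      · exact hE a ha' b hb' hab
  have hle : katokNum T μ n ε δ ≤ sepNum T n univ (ε / 2) := by
    refine Nat.sInf_le ⟨E, ?_, hcard⟩
    rw [hcov, measure_univ]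
    exact ENNReal.ofReal_lt_one.2 hδ1
  rw [EReal.coe_le_coe_iff]
  refine div_le_div_of_nonneg_right ?_ (Nat.cast_nonneg n)
  rcases Nat.eq_zero_or_pos (katokNum T μ n ε δ) with h0 | h0
  · rw [h0]; simpa using Real.log_natCast_nonneg _
  · exact Real.log_le_log (by exact_mod_cast h0) (by exact_mod_cast hle)

end Final

section Theorems

variable [MetricSpace X] [CompactSpace X] [Nonempty X] [MeasurableSpace X] [BorelSpace X]

/-- Variational principle for the upper metric mean dimension in terms of Katok's
entropy (Theorem 4.2, first part). -/
theorem upper_mdim_eq_limsup_katok (T : X → X) (hT : IsHomeomorph T)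
    (δ : ℝ) (hδ : δ ∈ Set.Ioo (0:ℝ) 1) :
    mdimUpper T = limsup (fun ε : ℝ =>
      (⨆ μ ∈ ergodicMeasures T, katokEnt T μ ε δ)
        / ((Real.log (1 / ε) : ℝ) : EReal)) (𝓝[>] (0:ℝ)) := by
  have hTc := hT.continuous
  refine le_antisymm ?_ ?_
  · refine limsup_compare (f := fun ε => sepEnt T univ ε)
      (g := fun ε => ⨆ μ ∈ ergodicMeasures T, katokEnt T μ ε δ)
      (fun ε _ => sup_nonneg hTc ε δ) (c := 1 / 4) (by norm_num) (by norm_num) fun ε hε => ?_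
    have := sepEnt_le_sup hTc (ε := 1 / 4 * ε) (by linarith) hδ.1 hδ.2
    rwa [show 4 * (1 / 4 * ε) = ε by ring] at this
  · refine limsup_compare (f := fun ε => ⨆ μ ∈ ergodicMeasures T, katokEnt T μ ε δ)
      (g := fun ε => sepEnt T univ ε)
      (fun ε _ => sepEnt_nonneg T ε) (c := 1 / 2) (by norm_num) (by norm_num) fun ε hε => ?_
    refine iSup₂_le fun μ hμ => ?_
    haveI := hμ.1
    have := katokEnt_le_sepEnt hTc μ hε hδ.2
    rwa [show ε / 2 = 1 / 2 * ε by ring] at this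

end Theorems
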